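/- arXiv:2012.11177 — 3 statements merged into one kernel-verified Lean document; each statement's English description precedes it below -/
import Mathlib

section
/- Let G be a graph on n vertices and let 0 ≤ β < α ≤ 1. Then for every k with 1 ≤ k ≤ n, the sum of the k largest eigenvalues of A_β(G) is at most the sum of the k largest eigenvalues of A_α(G), i.e. S_k(A_β(G)) ≤ S_k(A_α(G)). -/
open Matrix Finset Real

/-- The `A_α`-matrix of a graph: `A_α(G) = α·D(G) + (1−α)·A(G)`. -/
noncomputable def Aalpha {n : ℕ} (α : ℝ) (G : SimpleGraph (Fin n)) [DecidableRel G.Adj] :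
    Matrix (Fin n) (Fin n) ℝ :=
  α • Matrix.diagonal (fun i => (G.degree i : ℝ)) + (1 - α) • G.adjMatrix ℝ

/-- The sum of the `k` largest eigenvalues of a real symmetric matrix, expressed as
the supremum over all `k`-subsets of indices of the corresponding eigenvalue sums. -/
noncomputable def Sk {n : ℕ} (M : Matrix (Fin n) (Fin n) ℝ) (k : ℕ) : ℝ :=
  if h : M.IsHermitian then
    sSup {x : ℝ | ∃ s : Finset (Fin n), s.card = k ∧ x = ∑ i ∈ s, h.eigenvalues i}
  else 0

/-!
If `(u i)` and `(v j)` are orthonormal eigenbases of `S ≤ T`, with eigenvalues `l` and `m`, then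
`l i = ⟪u i, S (u i)⟫ ≤ ⟪u i, T (u i)⟫ = ∑ j, |⟪u i, v j⟫|² * m j`. The matrix `|⟪u i, v j⟫|²` is
doubly stochastic, hence by Birkhoff's theorem an average of permutation matrices, so every convex
monotone function of `l`, such as the sum over a fixed set of `k` indices, is at most its value at
some rearrangement of `m`. This applies to `A_β ≤ A_α`, because `A_α - A_β` is `α - β` times the
positive semidefinite Laplacian.
-/

section DoublyStochastic

variable {R ι : Type*} [Field R] [LinearOrder R] [IsStrictOrderedRing R]
  [Fintype ι] [DecidableEq ι]

theorem exists_perm_mulVec_le_of_mem_doublyStochastic {P : Matrix ι ι R}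
    (hP : P ∈ doublyStochastic R ι) {φ : (ι → R) → R} (hφ : ConvexOn R Set.univ φ) (x : ι → R) :
    ∃ σ : Equiv.Perm ι, φ (P *ᵥ x) ≤ φ (x ∘ σ) := by
  have hconv : ConvexOn R Set.univ fun Q : Matrix ι ι R ↦ φ (Q *ᵥ x) :=
    hφ.comp_linearMap ((mulVecBilin R R).flip x)
  have hhull : P ∈ convexHull R {Q | ∃ σ : Equiv.Perm ι, σ.permMatrix R = Q} :=
    doublyStochastic_eq_convexHull_permMatrix (R := R) (n := ι) ▸ hP
  obtain ⟨_, ⟨σ, rfl⟩, hσ⟩ := hconv.exists_ge_of_mem_convexHull (Set.subset_univ _) hhull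
  exact ⟨σ, by simpa only [permMatrix_mulVec] using hσ⟩

end DoublyStochastic

section InnerProductSpace

variable {𝕜 E ι : Type*} [RCLike 𝕜] [NormedAddCommGroup E] [InnerProductSpace 𝕜 E] [Fintype ι]

theorem of_sq_norm_inner_mem_doublyStochastic [DecidableEq ι] (u v : OrthonormalBasis ι 𝕜 E) :
    Matrix.of (fun i j ↦ ‖inner 𝕜 (u i) (v j)‖ ^ 2) ∈ doublyStochastic ℝ ι := by
  refine mem_doublyStochastic_iff_sum.2 ⟨fun i j ↦ sq_nonneg _, fun i ↦ ?_, fun j ↦ ?_⟩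
  · simp only [of_apply, v.sum_sq_norm_inner_left, u.norm_eq_one, one_pow]
  · simp only [of_apply, u.sum_sq_norm_inner_right, v.norm_eq_one, one_pow]

theorem re_inner_map_self_eq_sum_mul_sq_norm_inner {T : E →ₗ[𝕜] E} {v : OrthonormalBasis ι 𝕜 E}
    {m : ι → ℝ} (hT : ∀ j, T (v j) = (m j : 𝕜) • v j) (x : E) :
    RCLike.re (inner 𝕜 x (T x)) = ∑ j, ‖inner 𝕜 x (v j)‖ ^ 2 * m j := by
  have hTx : T x = ∑ j, (inner 𝕜 (v j) x * m j) • v j := by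
    conv_lhs => rw [← v.sum_repr' x]
    simp only [map_sum, map_smul, hT, smul_smul]
  have hterm (j : ι) : inner 𝕜 x ((inner 𝕜 (v j) x * m j) • v j)
      = ((‖inner 𝕜 x (v j)‖ ^ 2 * m j : ℝ) : 𝕜) := by
    rw [inner_smul_right, mul_right_comm, ← inner_conj_symm (v j) x, RCLike.conj_mul]
    norm_cast
  rw [hTx, inner_sum, map_sum]
  simp only [hterm, RCLike.ofReal_re]

theorem exists_perm_le_of_eigenbasis_of_le {S T : E →ₗ[𝕜] E} (hST : S ≤ T)
    {u v : OrthonormalBasis ι 𝕜 E} {l m : ι → ℝ} (hS : ∀ i, S (u i) = (l i : 𝕜) • u i)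
    (hT : ∀ j, T (v j) = (m j : 𝕜) • v j) {φ : (ι → ℝ) → ℝ} (hconv : ConvexOn ℝ Set.univ φ)
    (hmono : Monotone φ) : ∃ σ : Equiv.Perm ι, φ l ≤ φ (m ∘ σ) := by
  classical
  set P : Matrix ι ι ℝ := Matrix.of fun i j ↦ ‖inner 𝕜 (u i) (v j)‖ ^ 2
  have hl : l ≤ P *ᵥ m := fun i ↦
    calc l i = RCLike.re (inner 𝕜 (u i) (S (u i))) := by
          simp [hS, inner_smul_right]
      _ ≤ RCLike.re (inner 𝕜 (u i) (T (u i))) := by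
          simpa [inner_sub_right] using hST.re_inner_nonneg_right (u i)
      _ = (P *ᵥ m) i := re_inner_map_self_eq_sum_mul_sq_norm_inner hT (u i)
  obtain ⟨σ, hσ⟩ := exists_perm_mulVec_le_of_mem_doublyStochastic
    (of_sq_norm_inner_mem_doublyStochastic u v) hconv m
  exact ⟨σ, (hmono hl).trans hσ⟩

end InnerProductSpace

section Hermitian

open scoped MatrixOrder

variable {𝕜 ι : Type*} [RCLike 𝕜] [Fintype ι] [DecidableEq ι] {A B : Matrix ι ι 𝕜}

theorem toEuclideanLin_eigenvectorBasis (hA : A.IsHermitian) (i : ι) :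
    A.toEuclideanLin (hA.eigenvectorBasis i)
      = (hA.eigenvalues i : 𝕜) • hA.eigenvectorBasis i := by
  ext j
  simp [toLpLin_apply, hA.mulVec_eigenvectorBasis, RCLike.real_smul_eq_coe_mul]

theorem toEuclideanLin_mono (hAB : A ≤ B) : A.toEuclideanLin ≤ B.toEuclideanLin := by
  rw [LinearMap.le_def, ← map_sub, isPositive_toEuclideanLin_iff]
  exact hAB

theorem exists_perm_eigenvalues_le_of_le (hA : A.IsHermitian) (hB : B.IsHermitian) (hAB : A ≤ B)
    {φ : (ι → ℝ) → ℝ} (hconv : ConvexOn ℝ Set.univ φ) (hmono : Monotone φ) :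
    ∃ σ : Equiv.Perm ι, φ hA.eigenvalues ≤ φ (hB.eigenvalues ∘ σ) :=
  exists_perm_le_of_eigenbasis_of_le (toEuclideanLin_mono hAB)
    (toEuclideanLin_eigenvectorBasis hA) (toEuclideanLin_eigenvectorBasis hB) hconv hmono

theorem exists_card_eq_sum_eigenvalues_le_of_le (hA : A.IsHermitian) (hB : B.IsHermitian)
    (hAB : A ≤ B) (s : Finset ι) :
    ∃ t : Finset ι, t.card = s.card ∧ ∑ i ∈ s, hA.eigenvalues i ≤ ∑ i ∈ t, hB.eigenvalues i := by
  have hconv : ConvexOn ℝ Set.univ fun x : ι → ℝ ↦ ∑ i ∈ s, x i :=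
    ⟨convex_univ, fun x _ y _ a b _ _ _ ↦ by simp [sum_add_distrib, mul_sum]⟩
  have hmono : Monotone fun x : ι → ℝ ↦ ∑ i ∈ s, x i := fun _ _ h ↦ sum_le_sum fun i _ ↦ h i
  obtain ⟨σ, hσ⟩ := exists_perm_eigenvalues_le_of_le hA hB hAB hconv hmono
  exact ⟨s.map σ.toEmbedding, card_map _, hσ.trans_eq (sum_map s σ.toEmbedding _).symm⟩

end Hermitian

section Sk

open scoped MatrixOrder

variable {n k : ℕ} {A B : Matrix (Fin n) (Fin n) ℝ}

theorem isGreatest_Sk (hA : A.IsHermitian) (hkn : k ≤ n) :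
    IsGreatest {x | ∃ s : Finset (Fin n), s.card = k ∧ x = ∑ i ∈ s, hA.eigenvalues i}
      (Sk A k) := by
  have hfin : {x | ∃ s : Finset (Fin n), s.card = k ∧ x = ∑ i ∈ s, hA.eigenvalues i}.Finite :=
    (Set.finite_range fun s : Finset (Fin n) ↦ ∑ i ∈ s, hA.eigenvalues i).subset
      fun _ ⟨s, _, hs⟩ ↦ ⟨s, hs.symm⟩
  obtain ⟨s, -, hs⟩ := exists_subset_card_eq (s := (univ : Finset (Fin n))) (by simpa using hkn)
  rw [Sk, dif_pos hA]
  exact ⟨Set.Nonempty.csSup_mem ⟨_, s, hs, rfl⟩ hfin, fun _ hx ↦ le_csSup hfin.bddAbove hx⟩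

theorem Sk_le_Sk_of_le (hA : A.IsHermitian) (hB : B.IsHermitian) (hAB : A ≤ B) (hkn : k ≤ n) :
    Sk A k ≤ Sk B k := by
  obtain ⟨s, hs, hsum⟩ := (isGreatest_Sk hA hkn).1
  obtain ⟨t, ht, hle⟩ := exists_card_eq_sum_eigenvalues_le_of_le hA hB hAB s
  exact hsum.trans_le (hle.trans ((isGreatest_Sk hB hkn).2 ⟨t, ht.trans hs, rfl⟩))

end Sk

section Aalpha

open scoped MatrixOrder

variable {n : ℕ} (G : SimpleGraph (Fin n)) [DecidableRel G.Adj]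

theorem isHermitian_Aalpha (α : ℝ) : (Aalpha α G).IsHermitian :=
  ((isHermitian_diagonal _).smul (.all α)).add ((G.isHermitian_adjMatrix ℝ).smul (.all _))

theorem Aalpha_sub_Aalpha (α β : ℝ) :
    Aalpha α G - Aalpha β G = (α - β) • G.lapMatrix ℝ := by
  unfold Aalpha SimpleGraph.lapMatrix SimpleGraph.degMatrix
  module

theorem monotone_Aalpha : Monotone fun α : ℝ ↦ Aalpha α G := fun β α hβα ↦ by
  rw [Matrix.le_iff, Aalpha_sub_Aalpha]
  exact (G.posSemidef_lapMatrix ℝ).smul (sub_nonneg.2 hβα)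

end Aalpha

theorem stmt0_general {n : ℕ} (G : SimpleGraph (Fin n)) [DecidableRel G.Adj] {α β : ℝ}
    (hβα : β ≤ α) {k : ℕ} (hkn : k ≤ n) : Sk (Aalpha β G) k ≤ Sk (Aalpha α G) k :=
  Sk_le_Sk_of_le (isHermitian_Aalpha G β) (isHermitian_Aalpha G α) (monotone_Aalpha G hβα) hkn

theorem stmt0 {n : ℕ} (G : SimpleGraph (Fin n)) [DecidableRel G.Adj]
    (α β : ℝ) (hβ0 : 0 ≤ β) (hβα : β < α) (hα1 : α ≤ 1)
    (k : ℕ) (hk1 : 1 ≤ k) (hkn : k ≤ n) :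
    Sk (Aalpha β G) k ≤ Sk (Aalpha α G) k :=
  stmt0_general G hβα.le hkn
end

section
/- Let G ≠ K_n be a graph on n vertices with maximum degree Δ, and let 0 ≤ α < 1/(Δ+1). Then for every integer k with 2 ≤ k ≤ n, S_k(A_α(G)) ≤ ((1−α)n/2)·(1 + √k). -/
open Matrix Finset Real

/-!
Let `M` be a matrix all of whose entries are within `r` of a constant `m ≥ 0`, and let `J` be the
all-ones matrix. For orthonormal vectors `v₁, …, v_k`, split
`∑ ⟨vᵢ, M vᵢ⟩ = m ∑ ⟨vᵢ, 1⟩² + ∑ ⟨vᵢ, (M - m J) vᵢ⟩`. Bessel's inequality for the all-ones vector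
bounds the first term by `m n`. Cauchy–Schwarz, and Bessel's inequality for each row of `M - m J`,
bound the second by `√k` times the Frobenius norm of `M - m J`, hence by `√k r n`.
The condition on `α` puts the entries of `A_α(G)` in `[0, 1 - α]`, so `m = r = (1 - α) / 2`
is admissible; the `vᵢ` are eigenvectors.
-/

section Orthonormal

variable {ι V W : Type*} [Fintype V] [Fintype W] {v : ι → EuclideanSpace ℝ V}

lemma sum_dotProduct_sq_le (hv : Orthonormal ℝ v) (s : Finset ι) (w : V → ℝ) :
    ∑ i ∈ s, (w ⬝ᵥ v i) ^ 2 ≤ ∑ a, w a ^ 2 := by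
  simpa [EuclideanSpace.inner_eq_star_dotProduct, EuclideanSpace.norm_sq_eq] using
    hv.sum_inner_products_le (WithLp.toLp 2 w) (s := s)

lemma sum_mulVec_sq_le (hv : Orthonormal ℝ v) (s : Finset ι) (B : Matrix W V ℝ) :
    ∑ i ∈ s, ∑ a, (B *ᵥ v i) a ^ 2 ≤ ∑ a, ∑ b, B a b ^ 2 := by
  rw [Finset.sum_comm]
  exact Finset.sum_le_sum fun a _ => sum_dotProduct_sq_le hv s (B a)

lemma dotProduct_mulVec_sq_le (B : Matrix V V ℝ) {x : EuclideanSpace ℝ V} (hx : ‖x‖ = 1) :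
    (x ⬝ᵥ B *ᵥ x) ^ 2 ≤ ∑ a, (B *ᵥ x) a ^ 2 := by
  have hx_sq : ∑ a, x a ^ 2 = 1 := by
    simpa [hx] using (EuclideanSpace.real_norm_sq_eq x).symm
  simpa [dotProduct, hx_sq] using Finset.sum_mul_sq_le_sq_mul_sq univ x (B *ᵥ x)

lemma sum_dotProduct_mulVec_le (hv : Orthonormal ℝ v) (s : Finset ι) (B : Matrix V V ℝ) :
    ∑ i ∈ s, v i ⬝ᵥ B *ᵥ v i ≤ √(#s) * √(∑ a, ∑ b, B a b ^ 2) := by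
  rw [← Real.sqrt_mul (Nat.cast_nonneg _)]
  apply Real.le_sqrt_of_sq_le
  calc (∑ i ∈ s, v i ⬝ᵥ B *ᵥ v i) ^ 2
      ≤ #s * ∑ i ∈ s, (v i ⬝ᵥ B *ᵥ v i) ^ 2 := sq_sum_le_card_mul_sum_sq
    _ ≤ #s * ∑ i ∈ s, ∑ a, (B *ᵥ v i) a ^ 2 := by
        gcongr with i
        exact dotProduct_mulVec_sq_le B (hv.1 i)
    _ ≤ #s * ∑ a, ∑ b, B a b ^ 2 := by
        gcongr
        exact sum_mulVec_sq_le hv s B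

lemma sqrt_sum_sq_le_card_mul {B : Matrix V V ℝ} {r : ℝ} (hB : ∀ a b, |B a b| ≤ r) :
    √(∑ a, ∑ b, B a b ^ 2) ≤ Fintype.card V * r := by
  have card_mul_nonneg : 0 ≤ Fintype.card V * r := by
    simpa using Finset.sum_nonneg fun a (_ : a ∈ univ) => (abs_nonneg _).trans (hB a a)
  refine Real.sqrt_le_iff.2 ⟨card_mul_nonneg, ?_⟩
  calc ∑ a, ∑ b, B a b ^ 2 ≤ ∑ _a : V, ∑ _b : V, r ^ 2 := by
        refine Finset.sum_le_sum fun a _ => Finset.sum_le_sum fun b _ => ?_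
        exact sq_le_sq' (abs_le.1 (hB a b)).1 (abs_le.1 (hB a b)).2
    _ = (Fintype.card V * r) ^ 2 := by simp; ring

lemma dotProduct_mulVec_eq_add (M : Matrix V V ℝ) (m : ℝ) (x : V → ℝ) :
    x ⬝ᵥ M *ᵥ x = m * (1 ⬝ᵥ x) ^ 2 + x ⬝ᵥ (M - m • of 1) *ᵥ x := by
  have ones_mulVec : (of 1 : Matrix V V ℝ) *ᵥ x = (1 ⬝ᵥ x) • 1 := by
    ext a
    simp [mulVec, dotProduct]
  rw [sub_mulVec, smul_mulVec, ones_mulVec, dotProduct_sub, dotProduct_smul, dotProduct_smul,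
    dotProduct_comm x 1]
  simp only [smul_eq_mul]
  ring

theorem sum_dotProduct_mulVec_le_of_abs_sub_le (hv : Orthonormal ℝ v) (s : Finset ι)
    {M : Matrix V V ℝ} {m r : ℝ} (hm : 0 ≤ m) (hM : ∀ a b, |M a b - m| ≤ r) :
    ∑ i ∈ s, v i ⬝ᵥ M *ᵥ v i ≤ Fintype.card V * (m + r * √(#s)) := by
  have bessel_ones : ∑ i ∈ s, (1 ⬝ᵥ v i) ^ 2 ≤ (Fintype.card V : ℝ) := by
    simpa using sum_dotProduct_sq_le hv s 1
  have frobenius_norm_le :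
      √(∑ a, ∑ b, (M - m • of 1 : Matrix V V ℝ) a b ^ 2) ≤ Fintype.card V * r :=
    sqrt_sum_sq_le_card_mul fun a b => by simpa using hM a b
  calc ∑ i ∈ s, v i ⬝ᵥ M *ᵥ v i
      = m * ∑ i ∈ s, (1 ⬝ᵥ v i) ^ 2 + ∑ i ∈ s, v i ⬝ᵥ (M - m • of 1) *ᵥ v i := by
        rw [Finset.mul_sum, ← Finset.sum_add_distrib]
        exact Finset.sum_congr rfl fun i _ => dotProduct_mulVec_eq_add M m (v i)
    _ ≤ m * Fintype.card V + √(#s) * (Fintype.card V * r) := by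
        gcongr
        exact (sum_dotProduct_mulVec_le hv s _).trans (by gcongr)
    _ = Fintype.card V * (m + r * √(#s)) := by ring

end Orthonormal

lemma sum_eigenvalues_le_of_mem_Icc {V : Type*} [Fintype V] [DecidableEq V]
    {M : Matrix V V ℝ} (hM : M.IsHermitian) {c : ℝ} (hc : ∀ a b, M a b ∈ Set.Icc 0 c)
    (s : Finset V) :
    ∑ i ∈ s, hM.eigenvalues i ≤ c * Fintype.card V / 2 * (1 + √(#s)) := by
  cases isEmpty_or_nonempty V with
  | inl _ => simp [Finset.eq_empty_of_isEmpty s]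
  | inr hV =>
    obtain ⟨a⟩ := hV
    have c_nonneg : 0 ≤ c := (hc a a).1.trans (hc a a).2
    have abs_sub_half_le (a b : V) : |M a b - c / 2| ≤ c / 2 :=
      abs_le.2 ⟨by linarith [(hc a b).1], by linarith [(hc a b).2]⟩
    calc ∑ i ∈ s, hM.eigenvalues i
        = ∑ i ∈ s, hM.eigenvectorBasis i ⬝ᵥ M *ᵥ hM.eigenvectorBasis i := by
          simp [hM.eigenvalues_eq]
      _ ≤ Fintype.card V * (c / 2 + c / 2 * √(#s)) :=
          sum_dotProduct_mulVec_le_of_abs_sub_le hM.eigenvectorBasis.orthonormal s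
            (by positivity) abs_sub_half_le
      _ = c * Fintype.card V / 2 * (1 + √(#s)) := by ring

lemma Sk_le {n k : ℕ} {M : Matrix (Fin n) (Fin n) ℝ} (hM : M.IsHermitian) (hk : k ≤ n) {x : ℝ}
    (hx : ∀ s : Finset (Fin n), #s = k → ∑ i ∈ s, hM.eigenvalues i ≤ x) : Sk M k ≤ x := by
  rw [Sk, dif_pos hM]
  obtain ⟨t, -, ht⟩ := Finset.exists_subset_card_eq (s := (univ : Finset (Fin n))) (by simpa)
  refine csSup_le ⟨_, t, ht, rfl⟩ ?_
  rintro _ ⟨s, hs, rfl⟩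
  exact hx s hs

section Aalpha

variable {n : ℕ} (α : ℝ) (G : SimpleGraph (Fin n)) [DecidableRel G.Adj]

lemma Aalpha_isHermitian : (Aalpha α G).IsHermitian := by
  simp [IsHermitian, Aalpha]

lemma Aalpha_apply_self (a : Fin n) : Aalpha α G a a = α * G.degree a := by
  simp [Aalpha]

lemma Aalpha_apply_of_ne {a b : Fin n} (hab : a ≠ b) :
    Aalpha α G a b = if G.Adj a b then 1 - α else 0 := by
  simp [Aalpha, hab]

variable {α}

lemma Aalpha_apply_mem_Icc (hα0 : 0 ≤ α) (hα1 : α ≤ 1 / ((G.maxDegree : ℝ) + 1))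
    (a b : Fin n) : Aalpha α G a b ∈ Set.Icc 0 (1 - α) := by
  have mul_maxDegree_le : α * G.maxDegree ≤ 1 - α := by
    rw [le_div_iff₀ (by positivity)] at hα1
    linarith
  have one_sub_nonneg : 0 ≤ 1 - α := le_trans (by positivity) mul_maxDegree_le
  rcases eq_or_ne a b with rfl | hab
  · rw [Aalpha_apply_self]
    refine ⟨by positivity, le_trans ?_ mul_maxDegree_le⟩
    gcongr
    exact G.degree_le_maxDegree a
  · rw [Aalpha_apply_of_ne α G hab]
    split_ifs
    · exact ⟨one_sub_nonneg, le_rfl⟩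
    · exact ⟨le_rfl, one_sub_nonneg⟩

end Aalpha

theorem stmt1_general {n : ℕ} {M : Matrix (Fin n) (Fin n) ℝ} (hM : M.IsHermitian) {c : ℝ}
    (hc : ∀ a b, M a b ∈ Set.Icc 0 c) {k : ℕ} (hkn : k ≤ n) :
    Sk M k ≤ c * n / 2 * (1 + √k) := by
  refine Sk_le hM hkn fun s hs => ?_
  simpa [hs] using sum_eigenvalues_le_of_mem_Icc hM hc s

theorem stmt1 {n : ℕ} (G : SimpleGraph (Fin n)) [DecidableRel G.Adj] (hG : G ≠ ⊤)
    (α : ℝ) (hα0 : 0 ≤ α) (hα1 : α < 1 / ((G.maxDegree : ℝ) + 1))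
    (k : ℕ) (hk2 : 2 ≤ k) (hkn : k ≤ n) :
    Sk (Aalpha α G) k ≤ (1 - α) * n / 2 * (1 + Real.sqrt k) :=
  stmt1_general (Aalpha_isHermitian α G) (Aalpha_apply_mem_Icc G hα0 hα1.le) hkn
end

section
/- Let G be a bipartite graph on n vertices with m edges, and let η be the nullity of G (the multiplicity of the eigenvalue 0 of the adjacency matrix A(G)). Then the sum S_k(A(G)) of the k largest adjacency eigenvalues satisfies: S_k(A(G)) ≤ √(km) if 1 ≤ k ≤ ⌊(n−η)/2⌋; S_k(A(G)) ≤ √(⌊(n−η)/2⌋·m) if ⌊(n−η)/2⌋ < k ≤ ⌊(n+η)/2⌋; and S_k(A(G)) ≤ √((n−k)m) if ⌊(n+η)/2⌋ < k ≤ n. -/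
open Matrix Finset Real

/-!
Conjugating the adjacency matrix `A` of a bipartite graph by the `±1` diagonal matrix of a
2-colouring yields `-A`, so the spectrum is symmetric about `0`. Hence there are `p = rank A / 2`
positive eigenvalues, and their squares sum to half of `trace (A * A) = 2m`, that is, to `m`.
Discarding the nonpositive terms of a sum of `k` eigenvalues and applying Cauchy–Schwarz to the
others bounds the sum by both `√(km)` and `√(pm)`. Since all eigenvalues sum to `0`, it is also the
sum of the negatives of the remaining `n - k` eigenvalues, which gives `√((n - k)m)`.
-/

lemma sum_le_sqrt_card_filter_pos_mul {ι : Type*} (l : ι → ℝ) (s : Finset ι) :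
    ∑ i ∈ s, l i ≤ √(#{i ∈ s | 0 < l i} * ∑ i ∈ s with 0 < l i, l i ^ 2) := by
  have drop_nonpos : ∑ i ∈ s, l i ≤ ∑ i ∈ s with 0 < l i, l i := by
    rw [sum_filter]
    refine sum_le_sum fun i _ => ?_
    split_ifs with hi
    exacts [le_rfl, not_lt.mp hi]
  exact drop_nonpos.trans (Real.le_sqrt_of_sq_le sq_sum_le_card_mul_sum_sq)

/-- A finite family whose values, counted with multiplicity, are invariant under negation. The
eigenvalues of a bipartite graph form such a family. -/
def HasSymmetricValues {ι R : Type*} [Fintype ι] [Neg R] (l : ι → R) : Prop :=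
  univ.val.map (fun i => -l i) = univ.val.map l

namespace HasSymmetricValues

variable {ι : Type*} [Fintype ι]

lemma neg {R : Type*} [InvolutiveNeg R] {l : ι → R} (hl : HasSymmetricValues l) :
    HasSymmetricValues (-l) := by
  simpa [HasSymmetricValues] using! hl.symm

lemma sum_comp_neg {R N : Type*} [Neg R] [AddCommMonoid N] {l : ι → R}
    (hl : HasSymmetricValues l) (f : R → N) : ∑ i, f (-l i) = ∑ i, f (l i) := by
  simpa [Multiset.map_map] using! congrArg (fun t => (t.map f).sum) hl

section Order

variable {R : Type*} [AddCommGroup R] [LinearOrder R] [IsOrderedAddMonoid R] {l : ι → R}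

lemma sum_eq_zero (hl : HasSymmetricValues l) : ∑ i, l i = 0 := by
  have h : -∑ i, l i = ∑ i, l i := by simpa using hl.sum_comp_neg id
  exact self_eq_neg.mp h.symm

lemma two_nsmul_sum_filter_pos {N : Type*} [AddCommMonoid N] {f : R → N}
    (hl : HasSymmetricValues l) (hf : f.Even) (hf₀ : f 0 = 0) :
    2 • ∑ i with 0 < l i, f (l i) = ∑ i, f (l i) := by
  have sum_neg_eq_sum_pos : ∑ i with l i < 0, f (l i) = ∑ i with 0 < l i, f (l i) := by
    simpa [sum_filter, hf _] using hl.sum_comp_neg fun x => if 0 < x then f x else 0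
  rw [two_nsmul]
  nth_rw 2 [← sum_neg_eq_sum_pos]
  rw [sum_filter, sum_filter, ← sum_add_distrib]
  refine sum_congr rfl fun i _ => ?_
  rcases lt_trichotomy (l i) 0 with hi | hi | hi
  · simp [hi, hi.not_gt]
  · simp [hi, hf₀]
  · simp [hi, hi.not_gt]

lemma two_mul_card_filter_pos (hl : HasSymmetricValues l) :
    2 * #{i | 0 < l i} = #{i | l i ≠ 0} := by
  have ne_zero_of_pos : ∀ i ∈ ({i | 0 < l i} : Finset ι), l i ≠ 0 := fun i hi =>
    (mem_filter.mp hi).2.ne'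
  have h := hl.two_nsmul_sum_filter_pos (f := fun x => if x ≠ 0 then 1 else 0)
    (fun x => by simp) (by simp)
  rwa [sum_boole, sum_boole, filter_true_of_mem ne_zero_of_pos, smul_eq_mul] at h

end Order

variable {l : ι → ℝ} {m : ℝ}

lemma sum_filter_pos_sq (hl : HasSymmetricValues l) (hm : ∑ i, l i ^ 2 = 2 * m) :
    ∑ i with 0 < l i, l i ^ 2 = m := by
  have h := hl.two_nsmul_sum_filter_pos (f := (· ^ 2)) even_two.neg_pow (zero_pow two_ne_zero)
  rw [hm, nsmul_eq_mul, Nat.cast_ofNat] at h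
  exact mul_left_cancel₀ two_ne_zero h

lemma sum_le_sqrt_card_mul_of_filter_pos_subset (hl : HasSymmetricValues l)
    (hm : ∑ i, l i ^ 2 = 2 * m) {s t : Finset ι} (hst : {i ∈ s | 0 < l i} ⊆ t) :
    ∑ i ∈ s, l i ≤ √(#t * m) := by
  refine (sum_le_sqrt_card_filter_pos_mul l s).trans ?_
  rw [← hl.sum_filter_pos_sq hm]
  gcongr
  exact subset_univ s

lemma sum_le_sqrt_card_mul (hl : HasSymmetricValues l) (hm : ∑ i, l i ^ 2 = 2 * m)
    (s : Finset ι) : ∑ i ∈ s, l i ≤ √(#s * m) :=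
  hl.sum_le_sqrt_card_mul_of_filter_pos_subset hm (filter_subset _ s)

lemma sum_le_sqrt_card_filter_pos_univ_mul (hl : HasSymmetricValues l)
    (hm : ∑ i, l i ^ 2 = 2 * m) (s : Finset ι) : ∑ i ∈ s, l i ≤ √(#{i | 0 < l i} * m) :=
  hl.sum_le_sqrt_card_mul_of_filter_pos_subset hm (filter_subset_filter _ (subset_univ s))

lemma sum_le_sqrt_card_compl_mul [DecidableEq ι] (hl : HasSymmetricValues l)
    (hm : ∑ i, l i ^ 2 = 2 * m) (s : Finset ι) : ∑ i ∈ s, l i ≤ √(#sᶜ * m) := by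
  calc ∑ i ∈ s, l i = ∑ i ∈ sᶜ, (-l) i := by
        simp only [Pi.neg_apply, sum_neg_distrib]
        rw [eq_neg_iff_add_eq_zero, sum_add_sum_compl, hl.sum_eq_zero]
    _ ≤ √(#sᶜ * m) := hl.neg.sum_le_sqrt_card_mul (by simpa using hm) sᶜ

end HasSymmetricValues

section Hermitian

variable {𝕜 ι : Type*} [RCLike 𝕜] [Fintype ι] [DecidableEq ι] {A : Matrix ι ι 𝕜}

lemma trace_cfc_eq_sum (hA : A.IsHermitian) (f : ℝ → ℝ) :
    (cfc f A).trace = ∑ i, (f (hA.eigenvalues i) : 𝕜) := by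
  rw [hA.cfc_eq, IsHermitian.cfc, Unitary.conjStarAlgAut_apply, trace_mul_comm, ← mul_assoc]
  simp [trace_diagonal]

lemma trace_mul_self_eq_sum_eigenvalues_sq (hA : A.IsHermitian) :
    (A * A).trace = ∑ i, (hA.eigenvalues i : 𝕜) ^ 2 := by
  rw [← pow_two, ← cfc_pow_id (R := ℝ) A 2 hA.isSelfAdjoint, trace_cfc_eq_sum hA]
  simp only [RCLike.ofReal_pow]

lemma roots_charpoly_neg_eq_eigenvalues (hA : A.IsHermitian) :
    (-A).charpoly.roots = univ.val.map (fun i => ((-hA.eigenvalues i : ℝ) : 𝕜)) := by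
  rw [← cfc_neg_id (R := ℝ) A hA.isSelfAdjoint, hA.charpoly_cfc_eq, Polynomial.roots_prod]
  · simp
  · exact prod_ne_zero_iff.mpr fun i _ => Polynomial.X_sub_C_ne_zero _

lemma hasSymmetricValues_eigenvalues (hA : A.IsHermitian) (hneg : (-A).charpoly = A.charpoly) :
    HasSymmetricValues hA.eigenvalues := by
  have roots_eq := congrArg Polynomial.roots hneg
  rw [roots_charpoly_neg_eq_eigenvalues hA, hA.roots_charpoly_eq_eigenvalues] at roots_eq
  refine Multiset.map_injective (RCLike.ofReal_injective (K := 𝕜)) ?_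
  simpa only [Multiset.map_map] using! roots_eq

lemma two_mul_card_filter_pos_eigenvalues (hA : A.IsHermitian)
    (hneg : (-A).charpoly = A.charpoly) : 2 * #{i | 0 < hA.eigenvalues i} = A.rank := by
  rw [(hasSymmetricValues_eigenvalues hA hneg).two_mul_card_filter_pos,
    hA.rank_eq_card_non_zero_eigs, Fintype.card_subtype]

end Hermitian

lemma charpoly_neg_of_coloring {ι R : Type*} [Fintype ι] [DecidableEq ι] [CommRing R]
    {M : Matrix ι ι R} (c : ι → Bool) (hM : ∀ i j, c i = c j → M i j = 0) :
    (-M).charpoly = M.charpoly := by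
  let D : Matrix ι ι R := diagonal fun i => if c i then 1 else -1
  have D_mul_D : D * D = 1 := by
    rw [diagonal_mul_diagonal, diagonal_eq_one]
    ext i
    cases c i <;> simp
  have D_mul_M_mul_D : D * M * D = -M := by
    ext i j
    rw [mul_diagonal, diagonal_mul, Matrix.neg_apply]
    cases hi : c i <;> cases hj : c j <;> simp [hM i j, hi, hj]
  rw [← D_mul_M_mul_D, charpoly_mul_comm, ← mul_assoc, D_mul_D, one_mul]

section Graph

variable {V : Type*} [Fintype V] {G : SimpleGraph V} [DecidableRel G.Adj]

lemma charpoly_neg_adjMatrix [DecidableEq V] {R : Type*} [CommRing R] (hG : G.Colorable 2) :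
    (-G.adjMatrix R).charpoly = (G.adjMatrix R).charpoly := by
  let c : G.Coloring Bool := hG.toColoring (by simp)
  refine charpoly_neg_of_coloring c fun i j hij => ?_
  rw [SimpleGraph.adjMatrix_apply, if_neg fun hadj => c.valid hadj hij]

lemma trace_adjMatrix_mul_self {R : Type*} [NonAssocSemiring R] :
    (G.adjMatrix R * G.adjMatrix R).trace = 2 * #G.edgeFinset := by
  simp only [trace, diag_apply, SimpleGraph.adjMatrix_mul_self_apply_self]
  exact_mod_cast congrArg (Nat.cast : ℕ → R) G.sum_degrees_eq_twice_card_edges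

end Graph

lemma Sk_le_of_forall_sum_le {n : ℕ} {M : Matrix (Fin n) (Fin n) ℝ} (hM : M.IsHermitian) {k : ℕ}
    (hkn : k ≤ n) {b : ℝ} (hb : ∀ s : Finset (Fin n), #s = k → ∑ i ∈ s, hM.eigenvalues i ≤ b) :
    Sk M k ≤ b := by
  rw [Sk, dif_pos hM]
  refine csSup_le ?_ ?_
  · obtain ⟨s, -, hs⟩ := exists_subset_card_eq (s := (univ : Finset (Fin n))) (by simpa using hkn)
    exact ⟨_, s, hs, rfl⟩
  · rintro _ ⟨s, hs, rfl⟩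
    exact hb s hs

theorem stmt5_general {n : ℕ} {M : Matrix (Fin n) (Fin n) ℝ} (hM : M.IsHermitian)
    (hneg : (-M).charpoly = M.charpoly) {m : ℝ} (hm : (M * M).trace = 2 * m)
    {η : ℕ} (hη : η = n - M.rank) {k : ℕ} (hkn : k ≤ n) :
    Sk M k ≤ √(k * m) ∧ Sk M k ≤ √(((n - η) / 2 : ℕ) * m) ∧ Sk M k ≤ √((n - k : ℕ) * m) := by
  have hsymm := hasSymmetricValues_eigenvalues hM hneg
  have hsq : ∑ i, hM.eigenvalues i ^ 2 = 2 * m :=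
    (trace_mul_self_eq_sum_eigenvalues_sq hM).symm.trans hm
  have card_pos : #{i | 0 < hM.eigenvalues i} = (n - η) / 2 := by
    have two_mul_card := two_mul_card_filter_pos_eigenvalues hM hneg
    have rank_le : M.rank ≤ n := M.rank_le_width
    omega
  refine ⟨Sk_le_of_forall_sum_le hM hkn fun s hs => ?_,
    Sk_le_of_forall_sum_le hM hkn fun s _ => ?_, Sk_le_of_forall_sum_le hM hkn fun s hs => ?_⟩
  · exact hs ▸ hsymm.sum_le_sqrt_card_mul hsq s
  · exact card_pos ▸ hsymm.sum_le_sqrt_card_filter_pos_univ_mul hsq s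
  · have card_compl_eq : #sᶜ = n - k := by rw [card_compl, hs, Fintype.card_fin]
    exact card_compl_eq ▸ hsymm.sum_le_sqrt_card_compl_mul hsq s

theorem stmt5 {n : ℕ} (G : SimpleGraph (Fin n)) [DecidableRel G.Adj]
    (hbip : G.Colorable 2)
    (m : ℕ) (hm : G.edgeFinset.card = m)
    (η : ℕ) (hη : η = n - (G.adjMatrix ℝ).rank)
    (k : ℕ) (hk1 : 1 ≤ k) (hkn : k ≤ n) :
    (k ≤ (n - η) / 2 → Sk (G.adjMatrix ℝ) k ≤ Real.sqrt ((k : ℝ) * m)) ∧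
    ((n - η) / 2 < k → k ≤ (n + η) / 2 →
      Sk (G.adjMatrix ℝ) k ≤ Real.sqrt ((((n - η) / 2 : ℕ) : ℝ) * m)) ∧
    ((n + η) / 2 < k → Sk (G.adjMatrix ℝ) k ≤ Real.sqrt (((n - k : ℕ) : ℝ) * m)) := by
  obtain ⟨h₁, h₂, h₃⟩ := stmt5_general (G.isHermitian_adjMatrix ℝ) (charpoly_neg_adjMatrix hbip)
    (hm ▸ trace_adjMatrix_mul_self) hη hkn
  exact ⟨fun _ => h₁, fun _ _ => h₂, fun _ => h₃⟩
end
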